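/- arXiv:1301.2361 — 3 statements merged into one kernel-verified Lean document; each statement's English description precedes it below -/
import Mathlib

section
/- Let m be a nonzero integer and let s, t be real numbers with s > 0, t > 1, and s + 2 < t + 1/t < s + 2 + 4/(s·g_{m-1}(s)²). Then the trace of W = (XY⁻¹)^m (X⁻¹Y)^m equals s·(s + 2 - t - 1/t)·g_{m-1}(s)² + 2, and this trace lies strictly between -2 and 2; consequently W (which has determinant 1) has two distinct complex eigenvalues. -/
/-- `fN m` is the polynomial `f_m` (for `m ≥ 0`), viewed as a function of a real variable. -/
noncomputable def fN : ℕ → ℝ → ℝ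
  | 0 => fun _ => 1
  | 1 => fun s => s + 1
  | n + 2 => fun s => (s + 2) * fN (n + 1) s - fN n s

/-- `gN m` is the polynomial `g_m` (for `m ≥ 0`), viewed as a function of a real variable. -/
noncomputable def gN : ℕ → ℝ → ℝ
  | 0 => fun _ => 1
  | 1 => fun s => s + 2
  | n + 2 => fun s => (s + 2) * gN (n + 1) s - gN n s

/-- The two-sided family `f_m`, `m ∈ ℤ`, with `f_{-m} = f_{m-1}` for `m ≥ 1`. -/
noncomputable def fZ : ℤ → ℝ → ℝ
  | Int.ofNat n => fN n
  | Int.negSucc n => fN n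

/-- The two-sided family `g_m`, `m ∈ ℤ`, with `g_{-1} = 0` and `g_{-m} = -g_{m-2}` for `m ≥ 2`. -/
noncomputable def gZ : ℤ → ℝ → ℝ
  | Int.ofNat n => gN n
  | Int.negSucc 0 => fun _ => 0
  | Int.negSucc (n + 1) => fun s => -(gN n s)

open Matrix

/-- The matrix `X = [[√t, 1/√t], [0, 1/√t]]`. -/
noncomputable def Xmat (t : ℝ) : Matrix (Fin 2) (Fin 2) ℝ :=
  !![Real.sqrt t, 1 / Real.sqrt t; 0, 1 / Real.sqrt t]

/-- The matrix `Y = [[√t, 0], [-s√t, 1/√t]]`. -/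
noncomputable def Ymat (s t : ℝ) : Matrix (Fin 2) (Fin 2) ℝ :=
  !![Real.sqrt t, 0; -s * Real.sqrt t, 1 / Real.sqrt t]


theorem gZ_rec (m : ℤ) (s : ℝ) : gZ (m + 1) s = (s + 2) * gZ m s - gZ (m - 1) s := by
  rcases m with n | n
  · rcases n with _ | n
    · have e1 : (Int.ofNat 0 + 1 : ℤ) = Int.ofNat 1 := rfl
      have e2 : (Int.ofNat 0 - 1 : ℤ) = Int.negSucc 0 := rfl
      rw [e1, e2]
      simp [gZ, gN]
    · have e1 : (Int.ofNat (n + 1) + 1 : ℤ) = Int.ofNat (n + 2) := rfl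
      have e2 : (Int.ofNat (n + 1) - 1 : ℤ) = Int.ofNat n := by
        simp
      rw [e1, e2]
      simp [gZ, gN]
  · have e2 : (Int.negSucc n - 1 : ℤ) = Int.negSucc (n + 1) := rfl
    rcases n with _ | _ | n
    · have e1 : (Int.negSucc 0 + 1 : ℤ) = Int.ofNat 0 := rfl
      rw [e1, e2]
      simp [gZ, gN]
    · have e1 : (Int.negSucc (0 + 1) + 1 : ℤ) = Int.negSucc 0 := rfl
      rw [e1, e2]
      simp [gZ, gN]
    · have e1 : (Int.negSucc (n + 1 + 1) + 1 : ℤ) = Int.negSucc (n + 1) := rfl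
      rw [e1, e2]
      simp only [gZ, gN]
      ring

theorem gZ_zero (s : ℝ) : gZ 0 s = 1 := rfl
theorem gZ_neg_one (s : ℝ) : gZ (-1) s = 0 := rfl
theorem gZ_neg_two (s : ℝ) : gZ (-2) s = -1 := rfl

theorem gZ_norm (m : ℤ) (s : ℝ) :
    gZ m s ^ 2 + gZ (m - 1) s ^ 2 - (s + 2) * gZ m s * gZ (m - 1) s = 1 := by
  induction m using Int.induction_on with
  | zero => norm_num [gZ_zero, gZ_neg_one]
  | succ k ih =>
    rw [gZ_rec, add_sub_cancel_right]
    linear_combination ih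
  | pred k ih =>
    have h := gZ_rec (-(k : ℤ) - 1) s
    rw [sub_add_cancel] at h
    rw [h] at ih
    linear_combination ih

theorem zpow_formula (a b c d s : ℝ) (hdet : a * d - b * c = 1) (htr : a + d = s + 2) (m : ℤ) :
    (!![a, b; c, d] : Matrix (Fin 2) (Fin 2) ℝ) ^ m =
      !![gZ (m - 1) s * a - gZ (m - 2) s, gZ (m - 1) s * b;
         gZ (m - 1) s * c, gZ (m - 1) s * d - gZ (m - 2) s] := by
  have hd : (!![a, b; c, d] : Matrix (Fin 2) (Fin 2) ℝ).det = 1 := by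
    rw [Matrix.det_fin_two_of, hdet]
  have hu : IsUnit (!![a, b; c, d] : Matrix (Fin 2) (Fin 2) ℝ).det := by
    rw [hd]; exact isUnit_one
  have hinv : (!![a, b; c, d] : Matrix (Fin 2) (Fin 2) ℝ)⁻¹ = !![d, -b; -c, a] := by
    rw [Matrix.inv_def, hd, Matrix.adjugate_fin_two_of]; simp
  induction m using Int.induction_on with
  | zero =>
    norm_num [gZ_neg_one, gZ_neg_two]
    exact Matrix.one_fin_two
  | succ k ih =>
    have h := gZ_rec ((k : ℤ) - 1) s
    rw [Matrix.zpow_add_one hu, ih, Matrix.mul_fin_two]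
    have e1 : (k : ℤ) + 1 - 1 = (k : ℤ) - 1 + 1 := by ring
    have e2 : (k : ℤ) + 1 - 2 = (k : ℤ) - 1 := by ring
    have e3 : (k : ℤ) - 1 - 1 = (k : ℤ) - 2 := by ring
    rw [e3] at h
    rw [e1, e2, h]
    generalize gZ ((k : ℤ) - 1) s = p
    generalize gZ ((k : ℤ) - 2) s = q
    have hs : s = a + d - 2 := by linarith
    subst hs
    congr 1
    ext i j
    fin_cases i <;> fin_cases j <;> simp
    · linear_combination (-p) * hdet
    · ring
    · ring
    · linear_combination (-p) * hdet
  | pred k ih =>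
    have h := gZ_rec (-(k : ℤ) - 2) s
    rw [Matrix.zpow_sub_one hu, ih, hinv, Matrix.mul_fin_two]
    have e0 : -(k : ℤ) - 2 + 1 = -(k : ℤ) - 1 := by ring
    have e1 : -(k : ℤ) - 1 - 1 = -(k : ℤ) - 2 := by ring
    have e2 : -(k : ℤ) - 1 - 2 = -(k : ℤ) - 2 - 1 := by ring
    rw [e0] at h
    rw [e1, e2, h]
    generalize gZ (-(k : ℤ) - 2) s = p
    generalize gZ (-(k : ℤ) - 2 - 1) s = q
    have hs : s = a + d - 2 := by linarith
    subst hs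
    congr 1
    ext i j
    fin_cases i <;> fin_cases j <;> simp
    · linear_combination ((a + d) * p - q) * hdet
    · ring
    · ring
    · linear_combination ((a + d) * p - q) * hdet

theorem A_eq (s t : ℝ) (ht : 1 < t) : Xmat t * (Ymat s t)⁻¹ = !![1 + s, 1; s, 1] := by
  have h0 : Real.sqrt t ≠ 0 := (Real.sqrt_pos.2 (by linarith)).ne'
  have hd : (Ymat s t).det = 1 := by
    rw [Ymat, Matrix.det_fin_two_of]; field_simp; ring
  rw [Matrix.inv_def, hd, Ymat, Matrix.adjugate_fin_two_of, Xmat]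
  ext i j
  fin_cases i <;> fin_cases j <;> simp [h0] <;> field_simp

theorem B_eq (s t : ℝ) (ht : 1 < t) : (Xmat t)⁻¹ * Ymat s t = !![1 + s, -1 / t; -s * t, 1] := by
  have h0 : Real.sqrt t ≠ 0 := (Real.sqrt_pos.2 (by linarith)).ne'
  have hq : Real.sqrt t ^ 2 = t := Real.sq_sqrt (by linarith)
  have hd : (Xmat t).det = 1 := by
    rw [Xmat, Matrix.det_fin_two_of]; field_simp; ring
  rw [Matrix.inv_def, hd, Xmat, Matrix.adjugate_fin_two_of, Ymat]
  have ht0 : t ≠ 0 := by linarith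
  generalize Real.sqrt t = r at *
  subst hq
  ext i j
  fin_cases i <;> fin_cases j <;> simp [h0] <;> field_simp

theorem two_roots (M : Matrix (Fin 2) (Fin 2) ℝ) (hd : M.det = 1) (h1 : -2 < M.trace)
    (h2 : M.trace < 2) : ∃ lam₁ lam₂ : ℂ, lam₁ ≠ lam₂ ∧
      (M.map (Complex.ofReal)).charpoly.IsRoot lam₁ ∧
      (M.map (Complex.ofReal)).charpoly.IsRoot lam₂ := by
  have htr : (M.map (Complex.ofReal)).trace = ((M.trace : ℝ) : ℂ) := by
    simp [Matrix.trace_fin_two]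
  have hdet : (M.map (Complex.ofReal)).det = 1 := by
    rw [Matrix.det_fin_two] at *
    simp only [Matrix.map_apply]
    exact_mod_cast hd
  rw [Matrix.charpoly_fin_two, htr, hdet]
  generalize M.trace = τ at *
  have hp : 0 < 4 - τ ^ 2 := by nlinarith
  have hr : ((Real.sqrt (4 - τ ^ 2) : ℝ) : ℂ) ^ 2 = 4 - (τ : ℂ) ^ 2 := by
    exact_mod_cast Real.sq_sqrt hp.le
  have hr0 : ((Real.sqrt (4 - τ ^ 2) : ℝ) : ℂ) ≠ 0 := by
    exact_mod_cast (Real.sqrt_pos.2 hp).ne'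
  generalize ((Real.sqrt (4 - τ ^ 2) : ℝ) : ℂ) = r at *
  refine ⟨(τ + Complex.I * r) / 2, (τ - Complex.I * r) / 2, ?_, ?_, ?_⟩
  · intro h
    have : Complex.I * r = 0 := by linear_combination h
    exact (mul_ne_zero Complex.I_ne_zero hr0) this
  · simp only [Polynomial.IsRoot.def, Polynomial.eval_add, Polynomial.eval_sub,
      Polynomial.eval_pow, Polynomial.eval_X, Polynomial.eval_mul, Polynomial.eval_C]
    linear_combination (r ^ 2 / 4) * Complex.I_sq - hr / 4
  · simp only [Polynomial.IsRoot.def, Polynomial.eval_add, Polynomial.eval_sub,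
      Polynomial.eval_pow, Polynomial.eval_X, Polynomial.eval_mul, Polynomial.eval_C]
    linear_combination (r ^ 2 / 4) * Complex.I_sq - hr / 4

/-- The trace of `W = (XY⁻¹)^m (X⁻¹Y)^m` equals `s(s+2-t-1/t)g_{m-1}² + 2`, lies strictly
between `-2` and `2`, `W` has determinant `1`, and `W` has two distinct complex eigenvalues. -/
theorem trace_W (m : ℤ) (hm : m ≠ 0) (s t : ℝ) (hs : 0 < s) (ht : 1 < t)
    (h1 : s + 2 < t + 1 / t) (h2 : t + 1 / t < s + 2 + 4 / (s * gZ (m - 1) s ^ 2)) :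
    Matrix.trace ((Xmat t * (Ymat s t)⁻¹) ^ m * ((Xmat t)⁻¹ * Ymat s t) ^ m) =
      s * (s + 2 - t - 1 / t) * gZ (m - 1) s ^ 2 + 2 ∧
    (-2 : ℝ) < Matrix.trace ((Xmat t * (Ymat s t)⁻¹) ^ m * ((Xmat t)⁻¹ * Ymat s t) ^ m) ∧
    Matrix.trace ((Xmat t * (Ymat s t)⁻¹) ^ m * ((Xmat t)⁻¹ * Ymat s t) ^ m) < 2 ∧
    ((Xmat t * (Ymat s t)⁻¹) ^ m * ((Xmat t)⁻¹ * Ymat s t) ^ m).det = 1 ∧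
    ∃ lam₁ lam₂ : ℂ, lam₁ ≠ lam₂ ∧
      (((Xmat t * (Ymat s t)⁻¹) ^ m * ((Xmat t)⁻¹ * Ymat s t) ^ m).map
        (Complex.ofReal)).charpoly.IsRoot lam₁ ∧
      (((Xmat t * (Ymat s t)⁻¹) ^ m * ((Xmat t)⁻¹ * Ymat s t) ^ m).map
        (Complex.ofReal)).charpoly.IsRoot lam₂ := by
  have ht0 : t ≠ 0 := by linarith
  have hA := zpow_formula (1 + s) 1 s 1 s (by ring) (by ring) m
  have hB := zpow_formula (1 + s) (-1 / t) (-s * t) 1 s (by field_simp; ring) (by ring) m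
  have hN := gZ_norm (m - 1) s
  have e : m - 1 - 1 = m - 2 := by ring
  rw [e] at hN
  rw [A_eq s t ht, B_eq s t ht]
  have htrace : Matrix.trace ((!![1 + s, 1; s, 1] : Matrix (Fin 2) (Fin 2) ℝ) ^ m *
      !![1 + s, -1 / t; -s * t, 1] ^ m) = s * (s + 2 - t - 1 / t) * gZ (m - 1) s ^ 2 + 2 := by
    rw [hA, hB, Matrix.mul_fin_two, Matrix.trace_fin_two_of]
    linear_combination 2 * hN
  have hdet : ((!![1 + s, 1; s, 1] : Matrix (Fin 2) (Fin 2) ℝ) ^ m *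
      !![1 + s, -1 / t; -s * t, 1] ^ m).det = 1 := by
    rw [Matrix.det_mul, hA, hB, Matrix.det_fin_two_of, Matrix.det_fin_two_of]
    have k1 : ∀ p q : ℝ, (p * (1 + s) - q) * (p * 1 - q) - p * 1 * (p * s)
        = p ^ 2 + q ^ 2 - (s + 2) * p * q := by intros; ring
    have k2 : ∀ p q : ℝ, (p * (1 + s) - q) * (p * 1 - q) - p * (-1 / t) * (p * (-s * t))
        = p ^ 2 + q ^ 2 - (s + 2) * p * q := by intros; field_simp; ring
    rw [k1, k2, hN, one_mul]
  have hg : gZ (m - 1) s ≠ 0 := by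
    intro h
    rw [h] at h2
    norm_num at h2
    norm_num at h1
    linarith
  have hpos : 0 < s * gZ (m - 1) s ^ 2 := by positivity
  have h3 : (t + 1 / t - (s + 2)) * (s * gZ (m - 1) s ^ 2) < 4 := by
    rw [← lt_div_iff₀ hpos]; linarith
  have h4 : 0 < (t + 1 / t - (s + 2)) * (s * gZ (m - 1) s ^ 2) :=
    mul_pos (by linarith) hpos
  have h5 : -2 < Matrix.trace ((!![1 + s, 1; s, 1] : Matrix (Fin 2) (Fin 2) ℝ) ^ m *
      !![1 + s, -1 / t; -s * t, 1] ^ m) := by rw [htrace]; linarith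
  have h6 : Matrix.trace ((!![1 + s, 1; s, 1] : Matrix (Fin 2) (Fin 2) ℝ) ^ m *
      !![1 + s, -1 / t; -s * t, 1] ^ m) < 2 := by rw [htrace]; linarith
  exact ⟨htrace, h5, h6, hdet, two_roots _ hdet h5 h6⟩
end

section
/- Let m be a nonzero integer, let n ≤ -3 be an integer, set l = -n, and let s > 0 be a real number. Set d = 2 - 2cos(π/(2l-1)) and d' = 2 - 2cos(3π/(2l-1)). Then there exists a real number T with s + 2 + d/(s·g_{m-1}(s)²) < T < s + 2 + d'/(s·g_{m-1}(s)²) such that Φ(T) = 0, where Φ(T) = (U_n(τ(T)/2) - U_{n-1}(τ(T)/2)) + (s + 2 - T)·f_{m-1}(s)·g_{m-1}(s)·U_{n-1}(τ(T)/2) and τ(T) = s·(s + 2 - T)·g_{m-1}(s)² + 2. -/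
open Polynomial Real

lemma fN_pos_mono (s : ℝ) (hs : 0 < s) (k : ℕ) : 0 < fN k s ∧ fN k s ≤ fN (k + 1) s := by
  induction k with
  | zero => simp only [fN]; constructor <;> linarith
  | succ k ih =>
    obtain ⟨h1, h2⟩ := ih
    have e : fN (k + 1 + 1) s = (s + 2) * fN (k + 1) s - fN k s := by simp only [fN]
    have h3 : 0 < fN (k + 1) s := by linarith
    refine ⟨h3, ?_⟩
    rw [e]
    nlinarith [mul_pos hs h3]

lemma gN_pos_mono (s : ℝ) (hs : 0 < s) (k : ℕ) : 0 < gN k s ∧ gN k s ≤ gN (k + 1) s := by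
  induction k with
  | zero => simp only [gN]; constructor <;> linarith
  | succ k ih =>
    obtain ⟨h1, h2⟩ := ih
    have e : gN (k + 1 + 1) s = (s + 2) * gN (k + 1) s - gN k s := by simp only [gN]
    have h3 : 0 < gN (k + 1) s := by linarith
    refine ⟨h3, ?_⟩
    rw [e]
    nlinarith [mul_pos hs h3]

lemma fZ_pos (s : ℝ) (hs : 0 < s) (k : ℤ) : 0 < fZ k s := by
  cases k with
  | ofNat k => exact (fN_pos_mono s hs k).1
  | negSucc k => exact (fN_pos_mono s hs k).1

lemma gZ_ne (s : ℝ) (hs : 0 < s) (k : ℤ) (hk : k ≠ -1) : gZ k s ≠ 0 := by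
  match k, hk with
  | Int.ofNat k, _ => exact (gN_pos_mono s hs k).1.ne'
  | Int.negSucc 0, h => exact absurd rfl h
  | Int.negSucc (k + 1), _ =>
    show -(gN k s) ≠ 0
    exact neg_ne_zero.mpr (gN_pos_mono s hs k).1.ne'

lemma exists_angle (L c : ℝ) (hL : 3 ≤ L) (hc : c ≠ 0) :
    ∃ θ, π / (2 * L - 1) < θ ∧ θ < 3 * π / (2 * L - 1) ∧
      sin (L * θ) - sin ((L - 1) * θ) + c * (2 - 2 * cos θ) * sin (L * θ) = 0 := by
  have hd : 0 < 2 * L - 1 := by linarith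
  have hpi := pi_pos
  have hab : π / (2 * L - 1) < 3 * π / (2 * L - 1) := by gcongr; linarith
  have ha0 : 0 < π / (2 * L - 1) := by positivity
  have hbpi : 3 * π / (2 * L - 1) < π := by
    rw [div_lt_iff₀ hd]; nlinarith
  set a := π / (2 * L - 1) with ha
  set b := 3 * π / (2 * L - 1) with hb
  have ea : (2 * L - 1) * a = π := by rw [ha]; field_simp
  have eb : (2 * L - 1) * b = 3 * π := by rw [hb]; field_simp
  have sa : sin ((L - 1) * a) = sin (L * a) := by
    rw [← sin_pi_sub]; congr 1; linarith
  have sb : sin ((L - 1) * b) = sin (L * b) := by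
    rw [show (L - 1) * b = π - L * b + 2 * π by linarith, sin_add_two_pi, sin_pi_sub]
  have pa : 0 < sin (L * a) := by
    apply sin_pos_of_pos_of_lt_pi
    · nlinarith
    · nlinarith
  have pb : sin (L * b) < 0 := by
    have : 0 < sin (L * b - π) := by
      apply sin_pos_of_pos_of_lt_pi
      · nlinarith
      · nlinarith
    rw [sin_sub_pi] at this
    linarith
  have cpos : ∀ x, 0 < x → x ≤ π → 0 < 2 - 2 * cos x := by
    intro x h1 h2
    have := cos_lt_cos_of_nonneg_of_le_pi le_rfl h2 h1
    rw [cos_zero] at this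
    linarith
  have qa := mul_pos (cpos a ha0 (by linarith)) pa
  have qb := mul_neg_of_pos_of_neg (cpos b (by linarith) hbpi.le) pb
  let F : ℝ → ℝ := fun θ =>
    sin (L * θ) - sin ((L - 1) * θ) + c * (2 - 2 * cos θ) * sin (L * θ)
  have hF : ContinuousOn F (Set.Icc a b) := by
    apply Continuous.continuousOn
    show Continuous fun θ =>
      sin (L * θ) - sin ((L - 1) * θ) + c * (2 - 2 * cos θ) * sin (L * θ)
    fun_prop
  have Fa : F a = c * ((2 - 2 * cos a) * sin (L * a)) := by simp only [F, sa]; ring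
  have Fb : F b = c * ((2 - 2 * cos b) * sin (L * b)) := by simp only [F, sb]; ring
  have key : (0 : ℝ) ∈ F '' Set.Ioo a b := by
    rcases lt_or_gt_of_ne hc with h | h
    · apply intermediate_value_Ioo hab.le hF
      rw [Fa, Fb]
      exact ⟨mul_neg_of_neg_of_pos h qa, mul_pos_of_neg_of_neg h qb⟩
    · apply intermediate_value_Ioo' hab.le hF
      rw [Fa, Fb]
      exact ⟨mul_neg_of_pos_of_neg h qb, mul_pos h qa⟩
  obtain ⟨θ, ⟨h1, h2⟩, h3⟩ := key
  exact ⟨θ, h1, h2, h3⟩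

/-- For `m ≠ 0`, `n ≤ -3`, `l = -n` and `s > 0`, the function
`Φ(T) = (U_n(τ(T)/2) - U_{n-1}(τ(T)/2)) + (s+2-T) f_{m-1} g_{m-1} U_{n-1}(τ(T)/2)`,
with `τ(T) = s(s+2-T) g_{m-1}² + 2`, has a zero `T` with
`s + 2 + d/(s g_{m-1}²) < T < s + 2 + d'/(s g_{m-1}²)`, where `d = 2 - 2cos(π/(2l-1))`
and `d' = 2 - 2cos(3π/(2l-1))`. -/
theorem riley_root_exists_neg (m n : ℤ) (hm : m ≠ 0) (hn : n ≤ -3) (s : ℝ) (hs : 0 < s) :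
    ∃ T : ℝ,
      s + 2 + (2 - 2 * Real.cos (π / (2 * (-n) - 1))) / (s * gZ (m - 1) s ^ 2) < T ∧
      T < s + 2 + (2 - 2 * Real.cos (3 * π / (2 * (-n) - 1))) / (s * gZ (m - 1) s ^ 2) ∧
      ((Polynomial.Chebyshev.U ℝ n).eval ((s * (s + 2 - T) * gZ (m - 1) s ^ 2 + 2) / 2) -
        (Polynomial.Chebyshev.U ℝ (n - 1)).eval
          ((s * (s + 2 - T) * gZ (m - 1) s ^ 2 + 2) / 2)) +
      (s + 2 - T) * fZ (m - 1) s * gZ (m - 1) s *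
        (Polynomial.Chebyshev.U ℝ (n - 1)).eval
          ((s * (s + 2 - T) * gZ (m - 1) s ^ 2 + 2) / 2) = 0 := by
  have hf := fZ_pos s hs (m - 1)
  have hg := gZ_ne s hs (m - 1) (by omega)
  generalize fZ (m - 1) s = f at *
  generalize gZ (m - 1) s = g at *
  have hL : (3 : ℝ) ≤ -(n : ℝ) := by
    have : (n : ℝ) ≤ -3 := by exact_mod_cast hn
    linarith
  obtain ⟨θ, h1, h2, h3⟩ := exists_angle (-(n : ℝ)) (f / (s * g)) hL
    (div_ne_zero hf.ne' (mul_ne_zero hs.ne' hg))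
  have hd : 0 < 2 * (-(n : ℝ)) - 1 := by linarith
  have hpi := pi_pos
  have ha0 : 0 < π / (2 * (-(n : ℝ)) - 1) := by positivity
  have hbpi : 3 * π / (2 * (-(n : ℝ)) - 1) < π := by
    rw [div_lt_iff₀ hd]; nlinarith
  have hsg : 0 < s * g ^ 2 := by positivity
  have c1 := cos_lt_cos_of_nonneg_of_le_pi ha0.le (by linarith) h1
  have c2 := cos_lt_cos_of_nonneg_of_le_pi (by linarith) hbpi.le h2
  refine ⟨s + 2 + (2 - 2 * cos θ) / (s * g ^ 2), ?_, ?_, ?_⟩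
  · gcongr
  · gcongr
  · have hτ : (s * (s + 2 - (s + 2 + (2 - 2 * cos θ) / (s * g ^ 2))) * g ^ 2 + 2) / 2
        = cos θ := by
      field_simp
      ring
    rw [hτ]
    have hsin : 0 < sin θ := sin_pos_of_pos_of_lt_pi (by linarith) (by linarith)
    have u1 := Polynomial.Chebyshev.U_real_cos θ n
    have u2 := Polynomial.Chebyshev.U_real_cos θ (n - 1)
    push_cast at u1 u2
    rw [show ((n : ℝ) + 1) * θ = -((-(n : ℝ) - 1) * θ) by ring, sin_neg] at u1
    rw [show ((n : ℝ) - 1 + 1) * θ = -(-(n : ℝ) * θ) by ring, sin_neg] at u2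
    have hc : (s + 2 - (s + 2 + (2 - 2 * cos θ) / (s * g ^ 2))) * f * g
        = -(f / (s * g) * (2 - 2 * cos θ)) := by
      field_simp
      ring
    rw [hc]
    apply mul_right_cancel₀ hsin.ne'
    rw [zero_mul]
    linear_combination h3 + u1 - (1 + f / (s * g) * (2 - 2 * cos θ)) * u2
end

section
/- Let m be a nonzero integer and let t : ℝ → ℝ be any function such that for every s > 0 one has t(s) > 1 and s + 2 < t(s) + 1/t(s) < s + 2 + 4/(s·g_{m-1}(s)²). Then for every integer k with 1 ≤ k ≤ |m|, the function F_k(s) = t(s)^{k-1}·(-f_k(s) + t(s)·f_{k-1}(s)) tends to 1 as s → ∞. -/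
open Filter Topology

theorem gN_growth (s : ℝ) (hs : 0 < s) (n : ℕ) :
    0 < gN n s ∧ (s + 1) * gN n s ≤ gN (n + 1) s := by
  induction n with
  | zero => simp [gN]
  | succ n ih =>
    obtain ⟨h1, h2⟩ := ih
    have h3 : 0 < gN (n + 1) s := lt_of_lt_of_le (by positivity) h2
    refine ⟨h3, ?_⟩
    have h4 : gN (n + 2) s = (s + 2) * gN (n + 1) s - gN n s := rfl
    change _ ≤ gN (n + 2) s
    rw [h4]
    nlinarith [mul_pos hs h1]

theorem gN_lower (s : ℝ) (hs : 0 < s) (n : ℕ) : s ^ n ≤ gN n s := by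
  induction n with
  | zero => simp [gN]
  | succ n ih =>
    obtain ⟨h1, h2⟩ := gN_growth s hs n
    rw [pow_succ]
    nlinarith

theorem fN_growth (s : ℝ) (hs : 0 < s) (n : ℕ) :
    0 < fN n s ∧ fN n s ≤ fN (n + 1) s := by
  induction n with
  | zero => simp [fN]; exact hs.le
  | succ n ih =>
    obtain ⟨h1, h2⟩ := ih
    have h3 : 0 < fN (n + 1) s := lt_of_lt_of_le h1 h2
    refine ⟨h3, ?_⟩
    have h4 : fN (n + 2) s = (s + 2) * fN (n + 1) s - fN n s := rfl
    change _ ≤ fN (n + 2) s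
    rw [h4]
    nlinarith [mul_pos hs h3]

theorem fN_upper (s : ℝ) (hs : 0 < s) (n : ℕ) : fN n s ≤ (s + 2) ^ n := by
  induction n with
  | zero => simp [fN]
  | succ n ih =>
    have key : fN (n + 1) s ≤ (s + 2) * fN n s := by
      cases n with
      | zero => simp [fN]
      | succ n =>
        have h4 : fN (n + 2) s = (s + 2) * fN (n + 1) s - fN n s := rfl
        change fN (n + 2) s ≤ _
        rw [h4]
        linarith [(fN_growth s hs n).1]
    rw [pow_succ]
    nlinarith

theorem err_bound (n k : ℕ) (hk : k ≤ n) (s T d : ℝ) (hs : 1 ≤ s) (hT : 1 < T)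
    (hd : d = T + 1 / T - (s + 2)) (h0 : 0 < d) (h1 : d < 4 / (s * gN n s ^ 2)) :
    d * T ^ k * fN k s ≤ 4 * 21 ^ k / s := by
  have hs0 : 0 < s := by linarith
  have hg := gN_lower s hs0 n
  have hkn : s ^ k ≤ gN n s := (pow_le_pow_right₀ hs hk).trans hg
  have h1k : 1 ≤ s ^ k := one_le_pow₀ hs
  have h2 : d ≤ 4 / (s * (s ^ k) ^ 2) := h1.le.trans (by gcongr)
  have hd4 : d ≤ 4 := by
    refine h2.trans (div_le_self (by norm_num) ?_)
    nlinarith [one_le_pow₀ h1k (n := 2)]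
  have hTi : 0 < 1 / T := by positivity
  have hT7 : T ≤ 7 * s := by linarith
  have hf : fN k s ≤ (3 * s) ^ k :=
    (fN_upper s hs0 k).trans (pow_le_pow_left₀ (by linarith) (by linarith) k)
  have hf0 := (fN_growth s hs0 k).1
  calc d * T ^ k * fN k s ≤ (4 / (s * (s ^ k) ^ 2)) * (7 * s) ^ k * (3 * s) ^ k := by gcongr
    _ = 4 * 21 ^ k / s := by
      rw [show (21 : ℝ) = 7 * 3 by norm_num, mul_pow, mul_pow, mul_pow]
      field_simp

theorem F_limit_nat (n : ℕ) (t : ℝ → ℝ)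
    (ht : ∀ s : ℝ, 0 < s → 1 < t s ∧ s + 2 < t s + 1 / t s ∧
      t s + 1 / t s < s + 2 + 4 / (s * gN n s ^ 2)) (k : ℕ) (hk : k ≤ n) :
    Tendsto (fun s => t s ^ k * (-fN (k + 1) s + t s * fN k s)) atTop (𝓝 1) := by
  have herr : ∀ k ≤ n, Tendsto (fun s => (t s + 1 / t s - (s + 2)) * t s ^ k * fN k s)
      atTop (𝓝 0) := by
    intro k hk
    have hlim : Tendsto (fun s : ℝ => 4 * 21 ^ k / s) atTop (𝓝 0) :=
      tendsto_const_nhds.div_atTop tendsto_id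
    refine squeeze_zero' ?_ ?_ hlim
    · filter_upwards [eventually_ge_atTop 1] with s hs
      have hs0 : 0 < s := by linarith
      obtain ⟨a, b, c⟩ := ht s hs0
      have hf0 := (fN_growth s hs0 k).1
      have : 0 < t s + 1 / t s - (s + 2) := by linarith
      have : 0 < t s := by linarith
      positivity
    · filter_upwards [eventually_ge_atTop 1] with s hs
      have hs0 : 0 < s := by linarith
      obtain ⟨a, b, c⟩ := ht s hs0
      exact err_bound n k hk s (t s) _ hs a rfl (by linarith) (by linarith)
  induction k with
  | zero =>
    have hT : Tendsto t atTop atTop := by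
      refine tendsto_atTop_mono' _ ?_ tendsto_id
      filter_upwards [eventually_ge_atTop 1] with s hs
      obtain ⟨a, b, c⟩ := ht s (by linarith)
      have : 1 / t s ≤ 1 := by rw [div_le_one (by linarith)]; exact a.le
      simp only [id]
      linarith
    have hi : Tendsto (fun s => 1 / t s) atTop (𝓝 0) := tendsto_const_nhds.div_atTop hT
    have h := ((herr 0 hk).sub hi).const_add 1
    simp only [sub_zero, add_zero] at h
    refine h.congr fun s => ?_
    simp only [fN]
    ring
  | succ k ih =>
    have h := (ih (by omega)).add (herr (k + 1) hk)
    rw [add_zero] at h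
    refine h.congr' ?_
    filter_upwards [eventually_ge_atTop 1] with s hs
    obtain ⟨a, b, c⟩ := ht s (by linarith)
    have h0 : t s ≠ 0 := by linarith
    have h4 : fN (k + 1 + 1) s = (s + 2) * fN (k + 1) s - fN k s := rfl
    rw [h4]
    field_simp
    ring

theorem gZ_sq (m : ℤ) (n : ℕ) (h : |m| = n + 1) (s : ℝ) :
    gZ (m - 1) s ^ 2 = gN n s ^ 2 := by
  rcases abs_choice m with h' | h'
  · have : m - 1 = Int.ofNat n := by simp only [Int.ofNat_eq_natCast]; omega
    rw [this]; rfl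
  · have : m - 1 = Int.negSucc (n + 1) := by rw [Int.negSucc_eq]; push_cast; omega
    rw [this]; simp [gZ]

/-- If `t(s) > 1` and `s + 2 < t(s) + 1/t(s) < s + 2 + 4/(s g_{m-1}(s)²)` for all `s > 0`,
then for every integer `k` with `1 ≤ k ≤ |m|`,
`F_k(s) = t(s)^{k-1}(-f_k(s) + t(s) f_{k-1}(s)) → 1` as `s → ∞`. -/
theorem F_limit (m : ℤ) (hm : m ≠ 0) (t : ℝ → ℝ)
    (ht : ∀ s : ℝ, 0 < s → 1 < t s ∧ s + 2 < t s + 1 / t s ∧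
      t s + 1 / t s < s + 2 + 4 / (s * gZ (m - 1) s ^ 2)) :
    ∀ k : ℤ, 1 ≤ k → k ≤ |m| →
      Tendsto (fun s => t s ^ (k - 1) * (-fZ k s + t s * fZ (k - 1) s)) atTop (𝓝 1) := by
  intro k hk1 hk2
  obtain ⟨n, hn⟩ : ∃ n : ℕ, |m| = n + 1 := ⟨(|m| - 1).toNat, by omega⟩
  obtain ⟨j, rfl⟩ : ∃ j : ℕ, k = j + 1 := ⟨(k - 1).toNat, by omega⟩
  have h := F_limit_nat n t (fun s hs => by
    have := ht s hs
    rwa [gZ_sq m n hn s] at this) j (by omega)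
  have e1 : fZ ((j : ℤ) + 1) = fN (j + 1) := rfl
  have e2 : fZ (j : ℤ) = fN j := rfl
  simp only [add_sub_cancel_right, e1, e2, zpow_natCast]
  exact h
end
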